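/- arXiv:1601.07113 — 2 statements merged into one kernel-verified Lean document; each statement's English description precedes it below -/
import Mathlib

section
/- Let α > 3, β > 0, t₀ > 0, let Φ : H → ℝ be convex and twice continuously differentiable with argmin Φ nonempty, and let x : [t₀, ∞) → H be a solution of (DIN-AVD). Then t²(Φ(x(t)) − min Φ) → 0 and t‖ẋ(t) + β∇Φ(x(t))‖ → 0 as t → ∞. -/
open Filter MeasureTheory Set
open scoped Topology RealInnerProductSpace

variable {H : Type*} [NormedAddCommGroup H] [InnerProductSpace ℝ H] [CompleteSpace H]

/-- `x`, together with its first and second derivatives `x'`, `x''`, is a twice continuously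
differentiable solution of (DIN-AVD) on `[t₀, ∞)`:
`ẍ(t) + (α/t) ẋ(t) + β ∇²Φ(x(t)) ẋ(t) + ∇Φ(x(t)) = 0`. -/
def IsDINAVDSolution (α β t₀ : ℝ) (Φ : H → ℝ) (x x' x'' : ℝ → H) : Prop :=
  (∀ t ∈ Set.Ici t₀, HasDerivAt x (x' t) t) ∧
  (∀ t ∈ Set.Ici t₀, HasDerivAt x' (x'' t) t) ∧
  ContinuousOn x'' (Set.Ici t₀) ∧
  ∀ t ∈ Set.Ici t₀,
    x'' t + (α / t) • x' t + β • (fderiv ℝ (gradient Φ) (x t)) (x' t)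
      + gradient Φ (x t) = 0

/-- Convexity inequality at a minimizer (or any point). -/
lemma convex_grad_ineq (Φ : H → ℝ) (hconv : ConvexOn ℝ Set.univ Φ) (hd : Differentiable ℝ Φ)
    (a b : H) : Φ a - Φ b ≤ ⟪gradient Φ a, a - b⟫ := by
  have hc : ConvexOn ℝ Set.univ (fun s : ℝ => Φ (AffineMap.lineMap a b s)) := by
    have := hconv.comp_affineMap (AffineMap.lineMap a b : ℝ →ᵃ[ℝ] H)
    simpa [Function.comp_def] using this
  have hder : HasDerivAt (fun s : ℝ => Φ (AffineMap.lineMap a b s)) (⟪gradient Φ a, b - a⟫) 0 := by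
    have h1 : HasDerivAt (fun s : ℝ => (AffineMap.lineMap a b s : H)) (b - a) 0 :=
      AffineMap.hasDerivAt_lineMap
    have h2 : HasFDerivAt Φ (InnerProductSpace.toDual ℝ H (gradient Φ a))
        (AffineMap.lineMap a b (0:ℝ)) := by
      simpa using (hd a).hasGradientAt.hasFDerivAt
    exact h2.comp_hasDerivAt (0:ℝ) h1
  have h := hc.le_slope_of_hasDerivAt (mem_univ 0) (mem_univ 1) one_pos hder
  simp only [slope, sub_zero, inv_one, one_smul, vsub_eq_sub, AffineMap.lineMap_apply_one,
    AffineMap.lineMap_apply_zero] at h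
  have e : ⟪gradient Φ a, a - b⟫ = - ⟪gradient Φ a, b - a⟫ := by
    rw [← inner_neg_right, neg_sub]
  linarith

lemma grad_diff (Φ : H → ℝ) (hΦ : ContDiff ℝ 2 Φ) : Differentiable ℝ (gradient Φ) := by
  have h1 : ContDiff ℝ 1 (fderiv ℝ Φ) := hΦ.fderiv_right (by norm_num)
  have h2 : Differentiable ℝ (fderiv ℝ Φ) := h1.differentiable (by norm_num)
  exact (InnerProductSpace.toDual ℝ H).symm.toContinuousLinearEquiv.differentiable.comp h2

/-- The family of Lyapunov functions. -/
noncomputable def lyap (α β l : ℝ) (Φ : H → ℝ) (xs : H) (x x' : ℝ → H) (t : ℝ) : ℝ :=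
  (t ^ 2 + β * (α - 2 - l) * t) * (Φ (x t) - Φ xs)
    + 1 / 2 * ‖l • (x t - xs) + t • (x' t + β • gradient Φ (x t))‖ ^ 2
    + l * (α - 1 - l) / 2 * ‖x t - xs‖ ^ 2

/-- The limiting energy. -/
noncomputable def wen (α β : ℝ) (Φ : H → ℝ) (xs : H) (x x' : ℝ → H) (t : ℝ) : ℝ :=
  (t ^ 2 + β * (α - 2) * t) * (Φ (x t) - Φ xs)
    + 1 / 2 * t ^ 2 * ‖x' t + β • gradient Φ (x t)‖ ^ 2

lemma wen_eq (α β l m : ℝ) (hlm : l ≠ m) (Φ : H → ℝ) (xs : H) (x x' : ℝ → H) (t : ℝ) :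
    wen α β Φ xs x x' t = lyap α β l Φ xs x x' t
      - l * ((lyap α β l Φ xs x x' t - lyap α β m Φ xs x x' t) / (l - m)) := by
  have h : l - m ≠ 0 := sub_ne_zero.2 hlm
  have key : ∀ c : ℝ, lyap α β c Φ xs x x' t = wen α β Φ xs x x' t
      + c * (-β * t * (Φ (x t) - Φ xs) + t * ⟪x t - xs, x' t + β • gradient Φ (x t)⟫
        + (α - 1) / 2 * ‖x t - xs‖ ^ 2) := by
    intro c
    unfold lyap wen
    rw [@norm_add_sq_real, norm_smul, norm_smul, inner_smul_left, inner_smul_right, mul_pow,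
      mul_pow]
    simp only [Real.norm_eq_abs, sq_abs, conj_trivial]
    ring
  rw [key l, key m]
  field_simp
  ring

lemma lyap_deriv (α β l t₀ : ℝ) (ht₀ : 0 < t₀)
    (Φ : H → ℝ) (hΦ : ContDiff ℝ 2 Φ) (xs : H)
    (x x' x'' : ℝ → H) (hsol : IsDINAVDSolution α β t₀ Φ x x' x'') (t : ℝ) (ht : t₀ ≤ t) :
    HasDerivAt (lyap α β l Φ xs x x')
      ((2 * t + β * (α - 2 - l)) * (Φ (x t) - Φ xs) - (α - 1 - l) * t * ‖x' t‖ ^ 2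
        - l * (t - β) * ⟪gradient Φ (x t), x t - xs⟫
        - (t - β) * t * β * ‖gradient Φ (x t)‖ ^ 2) t := by
  obtain ⟨h1, h2, -, h4⟩ := hsol
  have hx := h1 t ht
  have hx' := h2 t ht
  have ho := h4 t ht
  have htp : 0 < t := lt_of_lt_of_le ht₀ ht
  have hΦx : HasDerivAt (fun s => Φ (x s)) ⟪gradient Φ (x t), x' t⟫ t := by
    have h := ((hΦ.differentiable (by norm_num)) (x t)).hasGradientAt.hasFDerivAt
    exact h.comp_hasDerivAt t hx
  have hg : HasDerivAt (fun s => gradient Φ (x s)) (fderiv ℝ (gradient Φ) (x t) (x' t)) t :=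
    ((grad_diff Φ hΦ) (x t)).hasFDerivAt.comp_hasDerivAt t hx
  have hv := hx'.add (hg.const_smul β)
  have hve : x'' t + β • (fderiv ℝ (gradient Φ) (x t)) (x' t)
      = -((α / t) • x' t) - gradient Φ (x t) := by
    rw [eq_sub_iff_add_eq, eq_neg_iff_add_eq_zero, ← ho]; abel
  rw [hve] at hv
  have hy := hx.sub_const xs
  have hu := (hy.const_smul l).add ((hasDerivAt_id t).smul hv)
  have hw : HasDerivAt (fun s : ℝ => s ^ 2 + β * (α - 2 - l) * s) (2 * t + β * (α - 2 - l)) t := by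
    have := (hasDerivAt_pow 2 t).add ((hasDerivAt_id t).const_mul (β * (α - 2 - l)))
    exact HasDerivAt.congr_deriv this (by simp)
  have hE := ((hw.mul (hΦx.sub_const (Φ xs))).add (hu.norm_sq.const_mul (1 / 2))).add
    (hy.norm_sq.const_mul (l * (α - 1 - l) / 2))
  refine HasDerivAt.congr_deriv (f := lyap α β l Φ xs x x') hE ?_
  simp only [id, Pi.add_apply, Pi.smul_apply, Pi.smul_apply', one_smul]
  generalize gradient Φ (x t) = g
  generalize x' t = p
  generalize x t - xs = y
  simp only [inner_add_left, inner_add_right, inner_sub_right, inner_neg_right, inner_smul_left,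
    inner_smul_right, conj_trivial, real_inner_self_eq_norm_sq, smul_sub, smul_neg]
  rw [real_inner_comm p g, real_inner_comm y g]
  field_simp
  ring

lemma lyap_decay (α β l t₀ : ℝ) (hα : 3 < α) (hβ : 0 < β) (ht₀ : 0 < t₀)
    (hl : 2 < l) (hl' : l < α - 1)
    (Φ : H → ℝ) (hconv : ConvexOn ℝ Set.univ Φ) (hΦ : ContDiff ℝ 2 Φ)
    (xs : H) (hmin : ∀ z, Φ xs ≤ Φ z)
    (x x' x'' : ℝ → H) (hsol : IsDINAVDSolution α β t₀ Φ x x' x'') :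
    ∃ k > 0, ∀ᶠ t in atTop, 0 ≤ lyap α β l Φ xs x x' t ∧
      ∃ d, HasDerivAt (lyap α β l Φ xs x x') d t ∧ d ≤ -k * (wen α β Φ xs x x' t / t) := by
  obtain ⟨k, hk, hk1, hk2⟩ : ∃ k > 0, k < l - 2 ∧ k < α - 1 - l := by
    obtain ⟨k, h, h'⟩ := exists_between (lt_min (sub_pos.2 hl) (sub_pos.2 hl'))
    exact ⟨k, h, (lt_min_iff.1 h').1, (lt_min_iff.1 h').2⟩
  refine ⟨k, hk, ?_⟩
  filter_upwards [eventually_ge_atTop t₀, eventually_ge_atTop (β + k * β),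
    eventually_ge_atTop (-(β * (α - 2 - l))),
    eventually_ge_atTop ((1 + k) * (β * (α - 2)) / (l - 2 - k))] with t h1 h2 h3 h4
  have htp : 0 < t := lt_of_lt_of_le ht₀ h1
  have hφ : 0 ≤ Φ (x t) - Φ xs := sub_nonneg.2 (hmin _)
  constructor
  · unfold lyap
    have e1 : 0 ≤ t ^ 2 + β * (α - 2 - l) * t := by nlinarith
    have e2 : 0 ≤ l * (α - 1 - l) / 2 := by
      have : 0 ≤ l * (α - 1 - l) := mul_nonneg (by linarith) (by linarith)
      linarith
    positivity
  · refine ⟨_, lyap_deriv α β l t₀ ht₀ Φ hΦ xs x x' x'' hsol t h1, ?_⟩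
    have hc := convex_grad_ineq Φ hconv (hΦ.differentiable (by norm_num)) (x t) xs
    have hW : wen α β Φ xs x x' t / t = (t + β * (α - 2)) * (Φ (x t) - Φ xs)
        + 1 / 2 * t * ‖x' t + β • gradient Φ (x t)‖ ^ 2 := by
      unfold wen; field_simp
    have hn : ‖x' t + β • gradient Φ (x t)‖ ^ 2
        ≤ 2 * ‖x' t‖ ^ 2 + 2 * β ^ 2 * ‖gradient Φ (x t)‖ ^ 2 := by
      have := parallelogram_law_with_norm ℝ (x' t) (β • gradient Φ (x t))
      have e : ‖β • gradient Φ (x t)‖ ^ 2 = β ^ 2 * ‖gradient Φ (x t)‖ ^ 2 := by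
        rw [norm_smul, mul_pow, Real.norm_eq_abs, sq_abs]
      nlinarith [sq_nonneg ‖x' t - β • gradient Φ (x t)‖]
    rw [hW]
    rw [div_le_iff₀ (by linarith)] at h4
    have i1 : l * (t - β) * (Φ (x t) - Φ xs) ≤ l * (t - β) * ⟪gradient Φ (x t), x t - xs⟫ :=
      mul_le_mul_of_nonneg_left hc (mul_nonneg (by linarith) (by nlinarith))
    have i2 : 0 ≤ (t * (l - 2 - k) - (1 + k) * (β * (α - 2))) * (Φ (x t) - Φ xs) :=
      mul_nonneg (by linarith) hφ
    have i3 : 0 ≤ (α - 1 - l - k) * t * ‖x' t‖ ^ 2 := by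
      have : 0 ≤ (α - 1 - l - k) := by linarith
      positivity
    have i4 : 0 ≤ (t - β - k * β) * (t * β * ‖gradient Φ (x t)‖ ^ 2) :=
      mul_nonneg (by linarith) (by positivity)
    have i5 := mul_le_mul_of_nonneg_left hn (show 0 ≤ k * (1 / 2 * t) by positivity)
    linarith

/-- A function with eventually nonpositive derivative and bounded below converges. -/
lemma tendsto_of_deriv (E : ℝ → ℝ) (h : ∀ᶠ t in atTop, 0 ≤ E t ∧ ∃ d, HasDerivAt E d t ∧ d ≤ 0) :
    ∃ L, 0 ≤ L ∧ Tendsto E atTop (𝓝 L) := by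
  obtain ⟨T, hT⟩ := eventually_atTop.1 h
  have hanti : AntitoneOn E (Ici T) := by
    apply antitoneOn_of_deriv_nonpos (convex_Ici T)
    · intro t ht
      obtain ⟨-, d, hd, -⟩ := hT t ht
      exact hd.continuousAt.continuousWithinAt
    · intro t ht
      rw [interior_Ici] at ht
      obtain ⟨-, d, hd, -⟩ := hT t (le_of_lt ht)
      exact hd.differentiableAt.differentiableWithinAt
    · intro t ht
      rw [interior_Ici] at ht
      obtain ⟨-, d, hd, hd'⟩ := hT t (le_of_lt ht)
      rw [hd.deriv]; exact hd'
  have hA : Antitone (fun t => E (max t T)) := fun a b hab =>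
    hanti (le_max_right a T) (le_max_right b T) (max_le_max_right T hab)
  have hB : BddBelow (range fun t => E (max t T)) := by
    refine ⟨0, ?_⟩
    rintro _ ⟨t, rfl⟩
    exact (hT _ (le_max_right t T)).1
  have hlim := tendsto_atTop_ciInf hA hB
  have hlim' : Tendsto E atTop (𝓝 (⨅ t, E (max t T))) := by
    refine hlim.congr' ?_
    filter_upwards [eventually_ge_atTop T] with t ht
    rw [max_eq_left ht]
  exact ⟨_, ge_of_tendsto hlim' (h.mono fun t ht => ht.1), hlim'⟩


theorem stmt10 (α β t₀ : ℝ) (hα : 3 < α) (hβ : 0 < β) (ht₀ : 0 < t₀)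
    (Φ : H → ℝ) (hconv : ConvexOn ℝ Set.univ Φ) (hΦ : ContDiff ℝ 2 Φ)
    (xstar : H) (hmin : ∀ z, Φ xstar ≤ Φ z)
    (x x' x'' : ℝ → H) (hsol : IsDINAVDSolution α β t₀ Φ x x' x'') :
    Tendsto (fun t => t ^ 2 * (Φ (x t) - Φ xstar)) atTop (𝓝 0) ∧
    Tendsto (fun t => t * ‖x' t + β • gradient Φ (x t)‖) atTop (𝓝 0) := by
  obtain ⟨l, hl, hl'⟩ := exists_between (show (2:ℝ) < α - 1 by linarith)
  obtain ⟨m, hm, hm'⟩ := exists_between hl'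
  have hWnn : ∀ᶠ t in atTop, 0 ≤ wen α β Φ xstar x x' t := by
    filter_upwards [eventually_ge_atTop 0] with t ht
    have h1 : 0 ≤ Φ (x t) - Φ xstar := sub_nonneg.2 (hmin _)
    have h2 : 0 ≤ α - 2 := by linarith
    unfold wen
    positivity
  have conv : ∀ c, 2 < c → c < α - 1 →
      ∃ L, 0 ≤ L ∧ Tendsto (lyap α β c Φ xstar x x') atTop (𝓝 L) := by
    intro c hc hc'
    obtain ⟨k, hk, hE⟩ := lyap_decay α β c t₀ hα hβ ht₀ hc hc' Φ hconv hΦ xstar hmin x x' x'' hsol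
    apply tendsto_of_deriv
    filter_upwards [hE, hWnn, eventually_gt_atTop 0] with t h1 h2 h3
    obtain ⟨h0, d, hd, hd'⟩ := h1
    refine ⟨h0, d, hd, hd'.trans ?_⟩
    have : 0 ≤ k * (wen α β Φ xstar x x' t / t) := by positivity
    linarith
  obtain ⟨L₁, hL₁, hE₁⟩ := conv l hl hl'
  obtain ⟨L₂, -, hE₂⟩ := conv m (hl.trans hm) hm'
  obtain ⟨L, hW⟩ : ∃ L, Tendsto (wen α β Φ xstar x x') atTop (𝓝 L) :=
    ⟨_, (hE₁.sub (((hE₁.sub hE₂).div_const (l - m)).const_mul l)).congr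
      fun t => (wen_eq α β l m hm.ne Φ xstar x x' t).symm⟩
  have hL0 : 0 ≤ L := ge_of_tendsto hW hWnn
  have hL : L = 0 := by
    by_contra hne
    have hLpos : 0 < L := lt_of_le_of_ne hL0 (Ne.symm hne)
    obtain ⟨k, hk, hE⟩ := lyap_decay α β l t₀ hα hβ ht₀ hl hl' Φ hconv hΦ xstar hmin x x' x'' hsol
    obtain ⟨M, -, hM⟩ := tendsto_of_deriv
      (fun t => lyap α β l Φ xstar x x' t + k * (L / 2) * Real.log t) (by
        filter_upwards [hE, hW.eventually_const_lt (half_lt_self hLpos),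
          eventually_ge_atTop 1] with t h1 h2 h3
        obtain ⟨h0, d, hd, hd'⟩ := h1
        have htp : 0 < t := by linarith
        refine ⟨?_, _, hd.add ((Real.hasDerivAt_log htp.ne').const_mul _), ?_⟩
        · have := Real.log_nonneg h3
          positivity
        · have : k * ((L / 2) / t) ≤ k * (wen α β Φ xstar x x' t / t) := by gcongr
          have e : k * (L / 2) * t⁻¹ = k * ((L / 2) / t) := by ring
          rw [e]; linarith)
    have hlog : Tendsto (fun t => k * (L / 2) * Real.log t) atTop atTop :=
      Real.tendsto_log_atTop.const_mul_atTop (by positivity)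
    exact not_tendsto_nhds_of_tendsto_atTop (hE₁.add_atTop hlog) M hM
  subst hL
  have hφ : ∀ t, 0 ≤ Φ (x t) - Φ xstar := fun t => sub_nonneg.2 (hmin _)
  constructor
  · refine squeeze_zero' (Eventually.of_forall fun t => mul_nonneg (sq_nonneg t) (hφ t)) ?_ hW
    filter_upwards [eventually_ge_atTop 0] with t ht
    have h2 : 0 ≤ α - 2 := by linarith
    have h3 := hφ t
    have : 0 ≤ β * (α - 2) * t * (Φ (x t) - Φ xstar) := by positivity
    have : 0 ≤ 1 / 2 * t ^ 2 * ‖x' t + β • gradient Φ (x t)‖ ^ 2 := by positivity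
    unfold wen
    linarith
  · have hs : Tendsto (fun t => √(2 * wen α β Φ xstar x x' t)) atTop (𝓝 0) := by
      have := (hW.const_mul 2).sqrt
      simpa using this
    refine squeeze_zero' ?_ ?_ hs
    · filter_upwards [eventually_ge_atTop 0] with t ht
      positivity
    · filter_upwards [eventually_ge_atTop 0] with t ht
      apply Real.le_sqrt_of_sq_le
      have h2 : 0 ≤ α - 2 := by linarith
      have h3 := hφ t
      have : 0 ≤ (t ^ 2 + β * (α - 2) * t) * (Φ (x t) - Φ xstar) := by positivity
      unfold wen
      rw [mul_pow]
      linarith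
end

section
/- Let α ≥ 3, β > 0, t₀ > 0, let Φ : H → ℝ be convex, twice continuously differentiable, boundedly inf-compact, and with argmin Φ nonempty, and let x : [t₀, ∞) → H be a solution of (DIN-AVD). Then there exists x* ∈ argmin Φ such that x(t) converges strongly to x* as t → ∞. -/
open Filter MeasureTheory Set
open scoped Topology RealInnerProductSpace

variable {H : Type*} [NormedAddCommGroup H] [InnerProductSpace ℝ H] [CompleteSpace H]

lemma aux_anti {f f' : ℝ → ℝ} {T : ℝ} (hd : ∀ t ≥ T, HasDerivAt f (f' t) t)
    (hn : ∀ t ≥ T, f' t ≤ 0) : ∀ s t, T ≤ s → s ≤ t → f t ≤ f s := by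
  have h : AntitoneOn f (Set.Ici T) := by
    apply antitoneOn_of_deriv_nonpos (convex_Ici T)
    · intro t ht
      exact (hd t ht).continuousAt.continuousWithinAt
    · intro t ht
      exact (hd t (interior_subset ht)).differentiableAt.differentiableWithinAt
    · intro t ht
      rw [(hd t (interior_subset ht)).deriv]
      exact hn t (interior_subset ht)
  intro s t hs hst
  exact h hs (hs.trans hst) hst

lemma aux_lim {F : ℝ → ℝ} {T : ℝ} (hF : ∀ s t, T ≤ s → s ≤ t → F t ≤ F s)
    (h0 : ∀ t ≥ T, 0 ≤ F t) : ∃ l, Tendsto F atTop (𝓝 l) ∧ ∀ t ≥ T, l ≤ F t := by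
  have han : Antitone (fun t => F (max t T)) := by
    intro s t hst
    exact hF _ _ (le_max_right _ _) (max_le_max_right T hst)
  have hb : BddBelow (range (fun t => F (max t T))) := by
    refine ⟨0, ?_⟩
    rintro _ ⟨t, rfl⟩
    exact h0 _ (le_max_right _ _)
  refine ⟨_, (tendsto_atTop_ciInf han hb).congr' ?_, ?_⟩
  · filter_upwards [eventually_ge_atTop T] with t ht
    simp [max_eq_left ht]
  · intro t ht
    have := ciInf_le hb t
    simpa [max_eq_left ht] using this

lemma aux_A {p p' : ℝ → ℝ} {T a c : ℝ} (hT : 0 < T) (ha : 0 < a)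
    (hd : ∀ t ≥ T, HasDerivAt p (p' t) t) (hn : ∀ t ≥ T, t * p' t + a * p t ≤ c) :
    ∀ t ≥ T, t ^ a * (p t - c / a) ≤ T ^ a * (p T - c / a) := by
  intro t ht
  refine aux_anti (f := fun t => t ^ a * (p t - c / a))
    (f' := fun t => (a * t ^ (a - 1)) * (p t - c / a) + t ^ a * p' t) ?_ ?_ T t le_rfl ht
  · intro s hs
    have hs0 : s ≠ 0 := (hT.trans_le hs).ne'
    exact (Real.hasDerivAt_rpow_const (Or.inl hs0)).mul ((hd s hs).sub_const _)
  · intro s hs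
    have hs0 : 0 < s := hT.trans_le hs
    have e : s ^ a = s ^ (a - 1) * s := by
      rw [← Real.rpow_add_one hs0.ne']; congr 1; ring
    have e2 : (a * s ^ (a - 1)) * (p s - c / a) + s ^ a * p' s
        = s ^ (a - 1) * (s * p' s + a * p s - c) := by
      rw [e]; field_simp; ring
    rw [e2]
    have h1 : 0 < s ^ (a - 1) := Real.rpow_pos_of_pos hs0 _
    have h2 := hn s hs
    nlinarith

lemma aux_A1 {p p' : ℝ → ℝ} {T a c : ℝ} (hT : 0 < T) (ha : 0 < a)
    (hd : ∀ t ≥ T, HasDerivAt p (p' t) t) (hn : ∀ t ≥ T, t * p' t + a * p t ≤ c) :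
    ∀ t ≥ T, p t ≤ c / a + |p T - c / a| := by
  intro t ht
  have h := aux_A hT ha hd hn t ht
  have h1 : T ^ a ≤ t ^ a := Real.rpow_le_rpow hT.le ht ha.le
  have h2 : 0 < T ^ a := Real.rpow_pos_of_pos hT _
  have h3 := le_abs_self (p T - c / a)
  have h4 := abs_nonneg (p T - c / a)
  by_contra hc
  push Not at hc
  have h5 : |p T - c / a| < p t - c / a := by linarith
  have h6 : T ^ a * (p T - c / a) ≤ T ^ a * |p T - c / a| := by gcongr
  have h7 : T ^ a * |p T - c / a| ≤ t ^ a * |p T - c / a| := by gcongr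
  have h8 : t ^ a * |p T - c / a| < t ^ a * (p t - c / a) :=
    mul_lt_mul_of_pos_left h5 (h2.trans_le h1)
  linarith

lemma aux_A2 {p p' : ℝ → ℝ} {T a c : ℝ} (hT : 0 < T) (ha : 0 < a)
    (hd : ∀ t ≥ T, HasDerivAt p (p' t) t) (hn : ∀ t ≥ T, t * p' t + a * p t ≤ c)
    {δ : ℝ} (hδ : 0 < δ) : ∀ᶠ t in atTop, p t ≤ c / a + δ := by
  have h1 := (tendsto_rpow_atTop ha).eventually_ge_atTop (T ^ a * (p T - c / a) / δ)
  filter_upwards [h1, eventually_ge_atTop T] with t h1 ht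
  have h := aux_A hT ha hd hn t ht
  have h3 : 0 < t ^ a := Real.rpow_pos_of_pos (hT.trans_le ht) _
  rw [div_le_iff₀ hδ] at h1
  have h4 : t ^ a * (p t - c / a) ≤ t ^ a * δ := h.trans h1
  have := le_of_mul_le_mul_left h4 h3
  linarith

lemma aux_B {w w' F F' r s : ℝ → ℝ} {T a C : ℝ} (hT : 0 < T) (ha : 0 < a)
    (hw : ∀ t ≥ T, HasDerivAt w (w' t) t) (hF : ∀ t ≥ T, HasDerivAt F (F' t) t)
    (hF' : ∀ t ≥ T, F' t ≤ 0) (hF0 : ∀ t ≥ T, 0 ≤ F t)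
    (hr : Tendsto r atTop (𝓝 0)) (hs : ∀ t ≥ T, s t ^ 2 ≤ C * (-F' t))
    (hode : ∀ t ≥ T, t * w' t + a * w t ≤ r t + s t) {ε : ℝ} (hε : 0 < ε) :
    ∀ᶠ t in atTop, w t ≤ ε := by
  obtain ⟨l, hl, hl2⟩ := aux_lim (aux_anti hF hF') hF0
  set η := a * ε / 6 with hη
  have hη0 : 0 < η := by positivity
  have e1 : ∀ᶠ t in atTop, r t ≤ η := hr.eventually_le_const hη0
  have e2 : ∀ᶠ t in atTop, F t ≤ l + η / a :=
    hl.eventually_le_const (by have : 0 < η / a := by positivity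
                               linarith)
  obtain ⟨T1, hT1⟩ := eventually_atTop.1
    (e1.and (e2.and ((eventually_ge_atTop T).and (eventually_ge_atTop (C / (4 * η))))))
  have hT1T : T ≤ T1 := (hT1 T1 le_rfl).2.2.1
  have key := aux_A2 (p := fun t => w t + (F t - l)) (p' := fun t => w' t + F' t)
    (T := T1) (a := a) (c := 3 * η) (hT.trans_le hT1T) ha ?_ ?_ (δ := ε / 2) (by positivity)
  · filter_upwards [key, eventually_ge_atTop T] with t ht htT
    have h1 := hl2 t htT
    have h2 : 3 * η / a = ε / 2 := by rw [hη]; field_simp; ring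
    rw [h2] at ht
    linarith
  · intro t ht
    exact (hw t (hT1T.trans ht)).add ((hF t (hT1T.trans ht)).sub_const _)
  · intro t ht
    obtain ⟨h1, h2, h3, h4⟩ := hT1 t ht
    have h5 := hode t h3
    have h6 := hs t h3
    have h7 := hF' t h3
    rw [div_le_iff₀ (by positivity)] at h4
    have h8 : a * (F t - l) ≤ η := by
      have : a * (F t - l) ≤ a * (η / a) := by gcongr; linarith
      rwa [mul_div_cancel₀ _ ha.ne'] at this
    have h9 : s t ≤ η + t * (-F' t) := by
      have g1 : s t ^ 2 ≤ t * (4 * η) * (-F' t) :=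
        h6.trans (mul_le_mul_of_nonneg_right h4 (by linarith))
      have g2 : 4 * η * s t ≤ 4 * η * (η + t * (-F' t)) := by
        nlinarith [sq_nonneg (s t - 2 * η)]
      exact le_of_mul_le_mul_left g2 (by positivity)
    nlinarith

lemma aux_grad {Φ : H → ℝ} (hconv : ConvexOn ℝ Set.univ Φ) (hΦ : Differentiable ℝ Φ) (u z : H) :
    Φ u - Φ z ≤ ⟪gradient Φ u, u - z⟫ := by
  have hc : ConvexOn ℝ Set.univ (fun s : ℝ => Φ (AffineMap.lineMap u z s)) := by
    exact hconv.comp_affineMap (AffineMap.lineMap u z : ℝ →ᵃ[ℝ] H)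
  have hd : HasDerivAt (fun s : ℝ => Φ (AffineMap.lineMap u z s)) ⟪gradient Φ u, z - u⟫ 0 := by
    have h1 : HasFDerivAt Φ (fderiv ℝ Φ u) (AffineMap.lineMap u z (0 : ℝ)) := by
      simpa using (hΦ u).hasFDerivAt
    have h2 := h1.comp_hasDerivAt (0 : ℝ) (AffineMap.hasDerivAt_lineMap (a := u) (b := z))
    refine h2.congr_deriv ?_
    rw [← toDual_gradient, InnerProductSpace.toDual_apply_apply]
  have := hc.le_slope_of_hasDerivAt (mem_univ 0) (mem_univ 1) one_pos hd
  simp only [slope, AffineMap.lineMap_apply_one, AffineMap.lineMap_apply_zero, vsub_eq_sub,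
    sub_zero, inv_one, one_smul] at this
  have h3 : ⟪gradient Φ u, u - z⟫ = -⟪gradient Φ u, z - u⟫ := by
    rw [← inner_neg_right, neg_sub]
  linarith

/-- the auxiliary curve -/
noncomputable def yAux (α β : ℝ) (Φ : H → ℝ) (x x' : ℝ → H) (t : ℝ) : H :=
  (α - 1) • x t + t • (x' t + β • gradient Φ (x t))

/-- the Lyapunov function -/
noncomputable def FAux (α β : ℝ) (Φ : H → ℝ) (x x' : ℝ → H) (z : H) (t : ℝ) : ℝ :=
  t ^ 2 * (Φ (x t) - Φ z) + t / (2 * (t - β)) * ‖yAux α β Φ x x' t - (α - 1) • z‖ ^ 2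

/-- derivative of the Lyapunov function -/
noncomputable def FAux' (α β : ℝ) (Φ : H → ℝ) (x x' : ℝ → H) (z : H) (t : ℝ) : ℝ :=
  2 * t * (Φ (x t) - Φ z) - (α - 1) * t * ⟪gradient Φ (x t), x t - z⟫
    - t ^ 2 * β * ‖gradient Φ (x t)‖ ^ 2
    - β / (2 * (t - β) ^ 2) * ‖yAux α β Φ x x' t - (α - 1) • z‖ ^ 2

lemma aux_gradC1 {Φ : H → ℝ} (hΦ : ContDiff ℝ 2 Φ) : Differentiable ℝ (gradient Φ) := by
  have h : ContDiff ℝ 1 (fderiv ℝ Φ) := hΦ.fderiv_right (by norm_num)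
  have h2 : Differentiable ℝ (fderiv ℝ Φ) := h.differentiable (by norm_num)
  exact (InnerProductSpace.toDual ℝ H).symm.toContinuousLinearEquiv.differentiable.comp h2

lemma aux_y {α β t₀ : ℝ} (ht₀ : 0 < t₀) {Φ : H → ℝ} (hΦ : ContDiff ℝ 2 Φ)
    {x x' x'' : ℝ → H} (hsol : IsDINAVDSolution α β t₀ Φ x x' x'') {t : ℝ} (ht : t₀ ≤ t) :
    HasDerivAt (yAux α β Φ x x') ((β - t) • gradient Φ (x t)) t := by
  obtain ⟨h1, h2, -, h3⟩ := hsol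
  have hg : HasDerivAt (fun t => gradient Φ (x t)) (fderiv ℝ (gradient Φ) (x t) (x' t)) t :=
    (aux_gradC1 hΦ (x t)).hasFDerivAt.comp_hasDerivAt t (h1 t ht)
  have := ((h1 t ht).const_smul (α - 1)).add
    ((hasDerivAt_id t).smul ((h2 t ht).add (hg.const_smul β)))
  refine this.congr_deriv ?_
  have e := h3 t ht
  have ht0 : t ≠ 0 := (ht₀.trans_le ht).ne'
  have e2 : x'' t + β • (fderiv ℝ (gradient Φ) (x t)) (x' t)
      = - ((α / t) • x' t) - gradient Φ (x t) := by
    rw [← sub_eq_zero, ← e]; abel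
  simp only [id, Pi.add_apply, Pi.smul_apply]
  rw [e2, smul_sub, smul_neg, smul_smul, mul_div_cancel₀ _ ht0]
  module

lemma aux_FDeriv {α β t₀ : ℝ} (hβ : 0 < β) (ht₀ : 0 < t₀) {Φ : H → ℝ} (hΦ : ContDiff ℝ 2 Φ)
    {x x' x'' : ℝ → H} (hsol : IsDINAVDSolution α β t₀ Φ x x' x'') (z : H) {t : ℝ}
    (ht : t₀ ≤ t) (htβ : β < t) :
    HasDerivAt (FAux α β Φ x x' z) (FAux' α β Φ x x' z t) t := by
  have hy := aux_y ht₀ hΦ hsol ht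
  have hx := hsol.1 t ht
  have hP : HasDerivAt (fun t => Φ (x t)) ⟪gradient Φ (x t), x' t⟫ t := by
    have h := ((hΦ.differentiable (by norm_num)) (x t)).hasFDerivAt.comp_hasDerivAt t hx
    refine h.congr_deriv ?_
    rw [← toDual_gradient, InnerProductSpace.toDual_apply_apply]
  have hv := (hy.sub_const ((α - 1) • z)).norm_sq
  have hne : t - β ≠ 0 := by linarith
  have hq : HasDerivAt (fun t => t / (2 * (t - β))) (-β / (2 * (t - β) ^ 2)) t := by
    have h := (hasDerivAt_id t).div (((hasDerivAt_id t).sub_const β).const_mul 2)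
      (by simpa using hne)
    refine h.congr_deriv ?_
    simp only [id]
    field_simp
    ring
  have := (((hasDerivAt_id t).pow 2).mul (hP.sub_const (Φ z))).add (hq.mul hv)
  refine this.congr_deriv ?_
  simp only [id, FAux', Pi.pow_apply]
  rw [inner_smul_right]
  have hin : ⟪yAux α β Φ x x' t - (α - 1) • z, gradient Φ (x t)⟫
      = (α - 1) * ⟪gradient Φ (x t), x t - z⟫ + t * ⟪gradient Φ (x t), x' t⟫
        + t * β * ‖gradient Φ (x t)‖ ^ 2 := by
    rw [real_inner_comm]
    have : yAux α β Φ x x' t - (α - 1) • z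
        = (α - 1) • (x t - z) + t • x' t + (t * β) • gradient Φ (x t) := by
      unfold yAux; module
    rw [this, inner_add_right, inner_add_right, inner_smul_right, inner_smul_right,
      inner_smul_right, real_inner_self_eq_norm_sq]
  rw [hin]
  field_simp
  ring

lemma aux_F'le {α β : ℝ} (hα : 3 ≤ α) (hβ : 0 < β) {Φ : H → ℝ}
    (hconv : ConvexOn ℝ Set.univ Φ) (hΦ : ContDiff ℝ 2 Φ)
    (x x' : ℝ → H) {z : H} (hz : ∀ w, Φ z ≤ Φ w) {t : ℝ} (ht : 0 < t) :
    FAux' α β Φ x x' z t ≤ - (β * t ^ 2 * ‖gradient Φ (x t)‖ ^ 2) := by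
  have h1 := aux_grad hconv (hΦ.differentiable (by norm_num)) (x t) z
  have h2 := hz (x t)
  have h3 : 0 ≤ β / (2 * (t - β) ^ 2) * ‖yAux α β Φ x x' t - (α - 1) • z‖ ^ 2 := by positivity
  have h4 : 2 * t * (Φ (x t) - Φ z) ≤ (α - 1) * t * ⟪gradient Φ (x t), x t - z⟫ := by
    calc 2 * t * (Φ (x t) - Φ z) ≤ (α - 1) * t * (Φ (x t) - Φ z) := by
          have : 0 ≤ Φ (x t) - Φ z := by linarith
          gcongr; linarith
      _ ≤ _ := by
          apply mul_le_mul_of_nonneg_left h1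
          apply mul_nonneg (by linarith) ht.le
  unfold FAux'
  linarith

lemma aux_Fge {α β : ℝ} (hβ : 0 < β) {Φ : H → ℝ}
    (x x' : ℝ → H) {z : H} (hz : ∀ w, Φ z ≤ Φ w) {t : ℝ} (ht : 0 < t) (htβ : β < t) :
    t ^ 2 * (Φ (x t) - Φ z) ≤ FAux α β Φ x x' z t ∧
    ‖yAux α β Φ x x' t - (α - 1) • z‖ ^ 2 ≤ 2 * FAux α β Φ x x' z t := by
  have h2 : 0 ≤ t ^ 2 * (Φ (x t) - Φ z) := mul_nonneg (by positivity) (by linarith [hz (x t)])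
  have h3 : 1 / 2 ≤ t / (2 * (t - β)) := by
    rw [div_le_div_iff₀ (by norm_num) (by linarith)]; linarith
  have h4 : 1 / 2 * ‖yAux α β Φ x x' t - (α - 1) • z‖ ^ 2
    ≤ t / (2 * (t - β)) * ‖yAux α β Φ x x' t - (α - 1) • z‖ ^ 2 := by gcongr
  have h5 : 0 ≤ ‖yAux α β Φ x x' t - (α - 1) • z‖ ^ 2 := by positivity
  unfold FAux
  constructor <;> linarith

lemma aux_clus {X Y : Type*} [TopologicalSpace X] [TopologicalSpace Y] [T2Space Y]
    {x : ℝ → X} {z : X} (hz : MapClusterPt z atTop x) {f : X → Y} (hf : Continuous f) {l : Y}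
    (hl : Tendsto (fun t => f (x t)) atTop (𝓝 l)) : f z = l := by
  have h : MapClusterPt (f z) atTop (f ∘ x) := hz.continuousAt_comp hf.continuousAt
  have h2 : ClusterPt (f z) (𝓝 l) := ClusterPt.mono h hl
  exact eq_of_nhds_neBot h2

theorem stmt13 (α β t₀ : ℝ) (hα : 3 ≤ α) (hβ : 0 < β) (ht₀ : 0 < t₀)
    (Φ : H → ℝ) (hconv : ConvexOn ℝ Set.univ Φ) (hΦ : ContDiff ℝ 2 Φ)
    (hinfc : ∀ (lam R : ℝ), 0 < R →
      IsCompact (closure {z : H | Φ z ≤ lam ∧ ‖z‖ ≤ R}))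
    (hne : ∃ z : H, ∀ w, Φ z ≤ Φ w)
    (x x' x'' : ℝ → H) (hsol : IsDINAVDSolution α β t₀ Φ x x' x'') :
    ∃ xstar : H, (∀ w, Φ xstar ≤ Φ w) ∧
      Tendsto (fun t => ‖x t - xstar‖) atTop (𝓝 0) := by
  obtain ⟨z0, hz0⟩ := hne
  set T := max t₀ β + 1 with hTdef
  have hTt : t₀ ≤ T := by have := le_max_left t₀ β; linarith
  have hTβ : β < T := by have := le_max_right t₀ β; linarith
  have hT : 0 < T := by linarith
  have hFd : ∀ z, ∀ t ≥ T, HasDerivAt (FAux α β Φ x x' z) (FAux' α β Φ x x' z t) t :=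
    fun z t ht => aux_FDeriv hβ ht₀ hΦ hsol z (hTt.trans ht) (hTβ.trans_le ht)
  have hF' : ∀ z, (∀ w, Φ z ≤ Φ w) → ∀ t ≥ T,
      FAux' α β Φ x x' z t ≤ - (β * t ^ 2 * ‖gradient Φ (x t)‖ ^ 2) :=
    fun z hz t ht => aux_F'le hα hβ hconv hΦ x x' hz (hT.trans_le ht)
  have hF'0 : ∀ z, (∀ w, Φ z ≤ Φ w) → ∀ t ≥ T, FAux' α β Φ x x' z t ≤ 0 := by
    intro z hz t ht
    have h1 := hF' z hz t ht
    have h2 : 0 ≤ β * t ^ 2 * ‖gradient Φ (x t)‖ ^ 2 := by positivity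
    linarith
  have hFge := fun z (hz : ∀ w, Φ z ≤ Φ w) t (ht : t ≥ T) =>
    aux_Fge (α := α) hβ x x' hz (hT.trans_le ht) (hTβ.trans_le ht)
  have hF0 : ∀ z, (∀ w, Φ z ≤ Φ w) → ∀ t ≥ T, 0 ≤ FAux α β Φ x x' z t := by
    intro z hz t ht
    have h1 := (hFge z hz t ht).2
    have h2 : 0 ≤ ‖yAux α β Φ x x' t - (α - 1) • z‖ ^ 2 := by positivity
    linarith
  have hFT : ∀ t ≥ T, FAux α β Φ x x' z0 t ≤ FAux α β Φ x x' z0 T :=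
    fun t ht => aux_anti (hFd z0) (hF'0 z0 hz0) T t le_rfl ht
  set F0 := FAux α β Φ x x' z0 T with hF0def
  have hF0nn : 0 ≤ F0 := hF0 z0 hz0 T le_rfl
  -- convergence of values
  have hval : Tendsto (fun t => Φ (x t)) atTop (𝓝 (Φ z0)) := by
    have h1 : Tendsto (fun t : ℝ => Φ z0 + F0 / t ^ 2) atTop (𝓝 (Φ z0)) := by
      have : Tendsto (fun t : ℝ => F0 / t ^ 2) atTop (𝓝 0) :=
        tendsto_const_nhds.div_atTop (tendsto_pow_atTop (by norm_num))
      simpa using this.const_add (Φ z0)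
    refine tendsto_of_tendsto_of_tendsto_of_le_of_le' tendsto_const_nhds h1
      (Eventually.of_forall fun t => hz0 _) ?_
    filter_upwards [eventually_ge_atTop T] with t ht
    have ht0 : 0 < t := hT.trans_le ht
    have h2 := (hFge z0 hz0 t ht).1.trans (hFT t ht)
    have h3 : Φ (x t) - Φ z0 ≤ F0 / t ^ 2 := by
      rw [le_div_iff₀ (by positivity)]; linarith
    linarith
  -- boundedness
  have hbdd : ∃ B, ∀ t ≥ T, ‖x t - z0‖ ^ 2 ≤ B := by
    have hq : ∀ t ≥ T, HasDerivAt (fun t => ‖x t - z0‖ ^ 2 + (β / T) * FAux α β Φ x x' z0 t)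
        (2 * ⟪x t - z0, x' t⟫ + (β / T) * FAux' α β Φ x x' z0 t) t := by
      intro t ht
      exact (((hsol.1 t (hTt.trans ht)).sub_const z0).norm_sq).add ((hFd z0 t ht).const_mul _)
    have := aux_A1 (c := 2 * F0 + 2 * (β / T * F0)) (a := 2) hT (by norm_num) hq ?_
    · refine ⟨_, fun t ht => le_trans ?_ (this t ht)⟩
      have := hF0 z0 hz0 t ht
      have : 0 ≤ β / T * FAux α β Φ x x' z0 t := by positivity
      linarith
    · intro t ht
      have ht0 : 0 < t := hT.trans_le ht
      have h1 := (hFge z0 hz0 t ht).2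
      have h2 := hFT t ht
      have h3 := hF' z0 hz0 t ht
      have h30 := hF'0 z0 hz0 t ht
      set v := yAux α β Φ x x' t - (α - 1) • z0 with hv
      set g := gradient Φ (x t) with hg
      have e : t • x' t = v - (α - 1) • (x t - z0) - (t * β) • g := by
        rw [hv, hg]; unfold yAux; module
      have e2 : t * ⟪x t - z0, x' t⟫
          = ⟪x t - z0, v⟫ - (α - 1) * ‖x t - z0‖ ^ 2 - ⟪x t - z0, (t * β) • g⟫ := by
        rw [← inner_smul_right, e, inner_sub_right, inner_sub_right, inner_smul_right _ _ (α - 1),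
          real_inner_self_eq_norm_sq]
      have i1 : 2 * ⟪x t - z0, v⟫ ≤ ‖x t - z0‖ ^ 2 + ‖v‖ ^ 2 := by
        have := norm_sub_sq_real (x t - z0) v
        nlinarith [sq_nonneg ‖x t - z0 - v‖]
      have i2 : -(2 * ⟪x t - z0, (t * β) • g⟫) ≤ ‖x t - z0‖ ^ 2 + β * (β * t ^ 2 * ‖g‖ ^ 2) := by
        have := norm_add_sq_real (x t - z0) ((t * β) • g)
        have h5 : ‖(t * β) • g‖ ^ 2 = β * (β * t ^ 2 * ‖g‖ ^ 2) := by
          rw [norm_smul, mul_pow, Real.norm_eq_abs, sq_abs]; ring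
        nlinarith [sq_nonneg ‖x t - z0 + (t * β) • g‖]
      have i3 : β * (β * t ^ 2 * ‖g‖ ^ 2) ≤ β * (- FAux' α β Φ x x' z0 t) := by
        gcongr; linarith
      have i4 : β * (- FAux' α β Φ x x' z0 t) ≤ t * (β / T * (- FAux' α β Φ x x' z0 t)) := by
        have : β ≤ t * (β / T) := by
          rw [← mul_div_assoc, le_div_iff₀ hT]; nlinarith
        calc _ ≤ (t * (β / T)) * (- FAux' α β Φ x x' z0 t) :=
              mul_le_mul_of_nonneg_right this (by linarith)
          _ = _ := by ring
      have i5 : β / T * FAux α β Φ x x' z0 t ≤ β / T * F0 := by gcongr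
      have i6 : 0 ≤ (α - 3) * ‖x t - z0‖ ^ 2 := mul_nonneg (by linarith) (by positivity)
      nlinarith
  obtain ⟨B, hB⟩ := hbdd
  -- limits of inner products
  have hinner : ∀ z, (∀ w, Φ z ≤ Φ w) → ∀ z', (∀ w, Φ z' ≤ Φ w) →
      ∃ L, Tendsto (fun t => ⟪x t, z' - z⟫) atTop (𝓝 L) := by
    intro z hz z' hz'
    have ha : 0 < α - 1 := by linarith
    obtain ⟨l1, hl1, -⟩ := aux_lim (aux_anti (hFd z) (hF'0 z hz)) (hF0 z hz)
    obtain ⟨l2, hl2, -⟩ := aux_lim (aux_anti (hFd z') (hF'0 z' hz')) (hF0 z' hz')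
    have hfac : Tendsto (fun t : ℝ => 1 - β / t) atTop (𝓝 1) := by
      have : Tendsto (fun t : ℝ => β / t) atTop (𝓝 0) := tendsto_const_nhds.div_atTop tendsto_id
      simpa using this.const_sub 1
    have hlim := ((((hl1.sub hl2).mul hfac).mul_const 2).sub_const
      ((α - 1) ^ 2 * (‖z‖ ^ 2 - ‖z'‖ ^ 2))).div_const (2 * (α - 1))
    have hΦeq : Φ z = Φ z' := le_antisymm (hz _) (hz' _)
    have hell : ∃ L, Tendsto (fun t => ⟪yAux α β Φ x x' t, z' - z⟫) atTop (𝓝 L) := by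
      refine ⟨_, hlim.congr' ?_⟩
      filter_upwards [eventually_ge_atTop T] with t ht
      have ht0 : 0 < t := hT.trans_le ht
      have htb : 0 < t - β := by linarith
      unfold FAux
      rw [norm_sub_sq_real, norm_sub_sq_real, inner_smul_right, inner_smul_right, norm_smul,
        norm_smul, mul_pow, mul_pow, Real.norm_eq_abs, sq_abs, inner_sub_right, hΦeq]
      field_simp
      ring
    obtain ⟨L, hL⟩ := hell
    refine ⟨L / (α - 1), ?_⟩
    have hr : Tendsto (fun t => ⟪yAux α β Φ x x' t, z' - z⟫ - L) atTop (𝓝 0) := by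
      simpa using hL.sub_const L
    have hr2 : Tendsto (fun t => -(⟪yAux α β Φ x x' t, z' - z⟫ - L)) atTop (𝓝 0) := by
      simpa using hr.neg
    have hwd : ∀ t ≥ T, HasDerivAt (fun t => ⟪x t, z' - z⟫ - L / (α - 1)) ⟪x' t, z' - z⟫ t := by
      intro t ht
      have := ((hsol.1 t (hTt.trans ht)).inner ℝ (hasDerivAt_const t (z' - z))).sub_const
        (L / (α - 1))
      simpa using this
    have hode : ∀ t ≥ T, t * ⟪x' t, z' - z⟫ + (α - 1) * (⟪x t, z' - z⟫ - L / (α - 1))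
        = (⟪yAux α β Φ x x' t, z' - z⟫ - L) - t * β * ⟪gradient Φ (x t), z' - z⟫ := by
      intro t ht
      unfold yAux
      simp only [inner_add_left, real_inner_smul_left]
      field_simp
      ring
    have hs : ∀ t ≥ T, (t * β * ⟪gradient Φ (x t), z' - z⟫) ^ 2
        ≤ (β * ‖z' - z‖ ^ 2) * (- FAux' α β Φ x x' z t) := by
      intro t ht
      have h1 := hF' z hz t ht
      have h2 : ⟪gradient Φ (x t), z' - z⟫ ^ 2 ≤ (‖gradient Φ (x t)‖ * ‖z' - z‖) ^ 2 :=
        sq_le_sq' (by linarith [neg_le_of_abs_le (abs_real_inner_le_norm (gradient Φ (x t)) (z' - z))])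
          (real_inner_le_norm _ _)
      calc (t * β * ⟪gradient Φ (x t), z' - z⟫) ^ 2
          = (t * β) ^ 2 * ⟪gradient Φ (x t), z' - z⟫ ^ 2 := by ring
        _ ≤ (t * β) ^ 2 * (‖gradient Φ (x t)‖ * ‖z' - z‖) ^ 2 := by gcongr
        _ = (β * ‖z' - z‖ ^ 2) * (β * t ^ 2 * ‖gradient Φ (x t)‖ ^ 2) := by ring
        _ ≤ _ := by gcongr; linarith
    rw [Metric.tendsto_nhds]
    intro ε hε
    have u1 := aux_B (s := fun t => -(t * β * ⟪gradient Φ (x t), z' - z⟫)) hT ha hwd (hFd z)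
      (hF'0 z hz) (hF0 z hz) hr (fun t ht => by rw [neg_sq]; exact hs t ht)
      (fun t ht => by rw [hode t ht]; linarith) (half_pos hε)
    have u2 := aux_B (s := fun t => (t * β * ⟪gradient Φ (x t), z' - z⟫)) hT ha
      (fun t ht => (hwd t ht).neg) (hFd z)
      (hF'0 z hz) (hF0 z hz) hr2 hs
      (fun t ht => by
        have := hode t ht
        simp only [Pi.neg_apply]
        linarith) (half_pos hε)
    filter_upwards [u1, u2] with t h1 h2
    simp only [Pi.neg_apply] at h2
    rw [Real.dist_eq, abs_lt]
    constructor <;> linarith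
  -- compactness
  have hK := hinfc (Φ z0 + 1) (‖z0‖ + (|B| + 1)) (by positivity)
  have hmem : ∀ᶠ t in atTop, x t ∈ closure {z : H | Φ z ≤ Φ z0 + 1 ∧ ‖z‖ ≤ ‖z0‖ + (|B| + 1)} := by
    filter_upwards [eventually_ge_atTop T, hval.eventually_le_const (lt_add_one _)] with t ht h1
    refine subset_closure ⟨h1, ?_⟩
    have h2 := hB t ht
    have h3 : ‖x t - z0‖ ≤ |B| + 1 := by
      have := le_abs_self B
      nlinarith [norm_nonneg (x t - z0), abs_nonneg B]
    have h4 : ‖x t‖ ≤ ‖z0‖ + ‖x t - z0‖ := by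
      simpa using norm_add_le z0 (x t - z0)
    linarith
  have hcl : ∀ z, MapClusterPt z atTop x → ∀ w, Φ z ≤ Φ w := by
    intro z hz w
    rw [aux_clus hz hΦ.continuous hval]
    exact hz0 w
  obtain ⟨z, -, hz⟩ := hK.exists_mapClusterPt (f := atTop) (u := x) (by simpa using hmem)
  refine ⟨z, hcl z hz, ?_⟩
  have hconvg : Tendsto x atTop (𝓝 z) := by
    refine hK.tendsto_nhds_of_unique_mapClusterPt hmem ?_
    intro z' _ hz'
    obtain ⟨L, hL⟩ := hinner z (hcl z hz) z' (hcl z' hz')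
    have hcont : Continuous (fun u : H => ⟪u, z' - z⟫) := by fun_prop
    have h1 := aux_clus hz hcont hL
    have h2 := aux_clus hz' hcont hL
    have h3 : ⟪z' - z, z' - z⟫ = 0 := by
      rw [inner_sub_left]; linarith
    exact sub_eq_zero.1 (inner_self_eq_zero.1 h3)
  exact tendsto_iff_norm_sub_tendsto_zero.1 hconvg
end
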